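/- arXiv:2505.17680 — 2 statements merged into one kernel-verified Lean document; each statement's English description precedes it below -/
import Mathlib

section
/- Let T be an even positive integer, N a positive integer, and a_1,…,a_N real numbers. Define a : ℝ → ℝ by a(x) = Σ_{n=1}^{N} a_n sin(nπ(x+1)/2) for x ∈ (−1,1) and a(x) = 0 for |x| ≥ 1, and for every positive integer k define ã_k = (1/(T+1)) ∫_{−1}^{1} a(x) sin(kπ(x+1+T)/(2(T+1))) dx. Then for every x with |x| < 1, the series A(x) = Σ_{k ≥ 1, (T+1) ∤ k} ã_k sin(kπ(x+1+T)/(2(T+1))) converges and a(x) = ((T+1)/T) · A(x). -/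
/-!
On the interval `(-(T + 1), T + 1)` the zero-extension `a` is continuous, and the explicit
antiderivative of a sine times an exponential shows that its Fourier coefficients are `O(1 / k ^ 2)`
(`norm_integral_sin_mul_exp_le`); hence the full sine series, over all `k`, converges absolutely to
`a x` (`hasSum_sine_series`).

For `k = (T + 1) * m` with `T` even, the `k`-th basis function is `± sin (m * π * (x + 1) / 2)`, with
a sign independent of `x` that cancels between the coefficient and the basis function. By
orthogonality of these sines on `(-1, 1)` (`integral_sin_mul_sin`), the corresponding term of the
series is `1 / (T + 1)` times the `m`-th mode of `a`, so the indices divisible by `T + 1` contribute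
exactly `a x / (T + 1)`. The remaining indices therefore sum to `a x * T / (T + 1)`.
-/

open Real

/-- Pointwise Fourier sine series on `(0, P)` of a continuous `f` vanishing off `(0, P)`, when its
exponential coefficients decay quadratically. The ordinary Fourier series of `f` on the circle of
length `2 * P` represents `f` at `y` and `0` at `-y`; subtracting the two leaves only sines. -/
lemma hasSum_sine_series {P : ℝ} (hP : 0 < P) {f : ℝ → ℝ} (hf : Continuous f)
    (h0 : ∀ y, y ∉ Set.Ioo 0 P → f y = 0) {C : ℝ}
    (hC : ∀ k : ℤ, (k : ℝ) ^ 2 *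
      ‖∫ z in (0 : ℝ)..P, (f z : ℂ) * Complex.exp (((-(k * π * z / P) : ℝ) : ℂ) * Complex.I)‖ ≤ C)
    {y : ℝ} (hy : y ∈ Set.Ioo 0 P) :
    HasSum (fun k : ℕ => (2 / P * ∫ z in (0 : ℝ)..P, f z * Real.sin (k * π * z / P)) *
      Real.sin (k * π * y / P)) (f y) := by
  have hfact : Fact (0 < 2 * P) := ⟨by linarith⟩
  set J : ℤ → ℂ := fun k =>
    ∫ z in (0 : ℝ)..P, (f z : ℂ) * Complex.exp (((-(k * π * z / P) : ℝ) : ℂ) * Complex.I) with hJ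
  have hcont : Continuous (AddCircle.liftIco (2 * P) 0 (fun z => (f z : ℂ))) := by
    apply AddCircle.liftIco_continuous
    · rw [h0 0 (by simp), h0 (0 + 2 * P) (by simp; intro; linarith)]
    · fun_prop
  set F : C(AddCircle (2 * P), ℂ) := ⟨_, hcont⟩ with hF
  have hFv : ∀ z ∈ Set.Ico (0 : ℝ) (0 + 2 * P), F (z : AddCircle (2 * P)) = (f z : ℂ) :=
    fun z hz => AddCircle.liftIco_coe_apply (f := fun z => (f z : ℂ)) hz
  have hcoef : ∀ k : ℤ, fourierCoeff F k = 1 / (2 * P) * J k := by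
    intro k
    have h1 : fourierCoeff F k = _ := fourierCoeff_eq_intervalIntegral F k 0
    have hsplit : ∫ z in (0 : ℝ)..(0 + 2 * P), fourier (-k) (z : AddCircle (2 * P)) • F z = J k := by
      have hI : ∀ u v : ℝ, IntervalIntegrable (fun z : ℝ =>
          (f z : ℂ) * Complex.exp (((-(k * π * z / P) : ℝ) : ℂ) * Complex.I))
          MeasureTheory.volume u v := by
        intro u v
        apply Continuous.intervalIntegrable
        fun_prop
      have h2 : ∫ z in (0 : ℝ)..(0 + 2 * P), fourier (-k) (z : AddCircle (2 * P)) • F z =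
          ∫ z in (0 : ℝ)..(0 + 2 * P),
            (f z : ℂ) * Complex.exp (((-(k * π * z / P) : ℝ) : ℂ) * Complex.I) := by
        refine intervalIntegral.integral_congr_Ioo_of_le (by linarith) fun z hz => ?_
        have := hFv z (Set.Ioo_subset_Ico_self hz)
        simp only [this]
        rw [fourier_coe_apply, smul_eq_mul, mul_comm]
        congr 2
        push_cast
        field_simp
      rw [h2, ← intervalIntegral.integral_add_adjacent_intervals (hI 0 P) (hI P _)]
      have h3 : ∫ z in P..(0 + 2 * P),
          (f z : ℂ) * Complex.exp (((-(k * π * z / P) : ℝ) : ℂ) * Complex.I) = 0 := by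
        rw [intervalIntegral.integral_congr (g := fun _ => (0 : ℂ))]
        · simp
        · intro z hz
          rw [Set.uIcc_of_le (by linarith)] at hz
          have : f z = 0 := h0 z (by simp only [Set.mem_Ioo, not_and, not_lt]; intro; exact hz.1)
          simp [this]
      rw [h3, add_zero]
    rw [h1, hsplit]
    simp
  have hsum : Summable (fourierCoeff F) := by
    have hs : Summable (fun k : ℤ => C / (2 * P) * (1 / (k : ℝ) ^ 2)) :=
      (Real.summable_one_div_int_pow.mpr one_lt_two).mul_left _
    refine Summable.of_norm_bounded_eventually hs ?_
    -- at `k = 0` the comparison term is `1 / 0 = 0`, so this index is discarded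
    filter_upwards [(Set.finite_singleton (0 : ℤ)).compl_mem_cofinite] with k hk
    have hk' : (k : ℝ) ≠ 0 := by simpa using hk
    have hk2 : 0 < (k : ℝ) ^ 2 := by positivity
    rw [hcoef, norm_mul]
    have h1 : ‖(1 / (2 * (P : ℂ)))‖ = 1 / (2 * P) := by
      simp [abs_of_pos hP]
    have h2 : ‖J k‖ ≤ C / (k : ℝ) ^ 2 := by
      rw [le_div_iff₀ hk2, mul_comm]; exact hC k
    calc _ ≤ 1 / (2 * P) * (C / (k : ℝ) ^ 2) := by
          rw [h1]; gcongr
      _ = _ := by ring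
  have hy1 := has_pointwise_sum_fourier_series_of_summable hsum (y : AddCircle (2 * P))
  have hy2 := has_pointwise_sum_fourier_series_of_summable hsum
    ((2 * P - y : ℝ) : AddCircle (2 * P))
  have hF1 : F (y : AddCircle (2 * P)) = (f y : ℂ) :=
    hFv y ⟨hy.1.le, by linarith [hy.2]⟩
  have hF2 : F ((2 * P - y : ℝ) : AddCircle (2 * P)) = 0 := by
    have : F ((2 * P - y : ℝ) : AddCircle (2 * P)) = (f (2 * P - y) : ℂ) :=
      hFv _ ⟨by linarith [hy.2], by linarith [hy.1]⟩
    rw [this, h0 _ (by simp only [Set.mem_Ioo, not_and, not_lt]; intro; linarith [hy.2])]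
    simp
  have hd := (hy1.sub hy2).nat_add_neg
  rw [hF1, hF2] at hd
  have hterm : ∀ k : ℤ, fourierCoeff F k • fourier k (y : AddCircle (2 * P)) -
      fourierCoeff F k • fourier k ((2 * P - y : ℝ) : AddCircle (2 * P)) =
      1 / (2 * P) * J k * (2 * Complex.I * Complex.sin (k * π * y / P)) := by
    intro k
    have hper : ((2 * P - y : ℝ) : AddCircle (2 * P)) = ((-y : ℝ) : AddCircle (2 * P)) := by
      rw [sub_eq_add_neg, AddCircle.coe_add, AddCircle.coe_period, zero_add]
    rw [hper, fourier_coe_apply, fourier_coe_apply, hcoef, Complex.sin]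
    have hPc : (P : ℂ) ≠ 0 := by exact_mod_cast hP.ne'
    have e1 : 2 * (π : ℂ) * Complex.I * k * (y : ℝ) / ((2 * P : ℝ) : ℂ) =
        k * π * y / P * Complex.I := by
      push_cast; field_simp
    have e2 : 2 * (π : ℂ) * Complex.I * k * ((-y : ℝ) : ℂ) / ((2 * P : ℝ) : ℂ) =
        -(k * π * y / P) * Complex.I := by
      push_cast; field_simp
    rw [e1, e2, smul_eq_mul, smul_eq_mul]
    linear_combination (-1 / (2 * (P : ℂ))) * J k * (Complex.exp (-(k * π * y / P) * Complex.I)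
      - Complex.exp (k * π * y / P * Complex.I)) * Complex.I_sq
  simp only [hterm] at hd
  have hJs : ∀ k : ℕ, J k - J (-k) =
      -2 * Complex.I * ((∫ z in (0 : ℝ)..P, f z * Real.sin (k * π * z / P) : ℝ) : ℂ) := by
    intro k
    rw [← intervalIntegral.integral_ofReal, ← intervalIntegral.integral_const_mul]
    simp only [hJ]
    rw [← intervalIntegral.integral_sub]
    · congr 1
      ext z
      push_cast
      rw [Complex.sin]
      have e : -(-(k : ℂ) * π * z / P) = k * π * z / P := by ring
      rw [e]
      linear_combination (f z : ℂ) * (Complex.exp (-(k * π * z / P) * Complex.I)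
      - Complex.exp (k * π * z / P * Complex.I)) * Complex.I_sq
    all_goals
      apply Continuous.intervalIntegrable
      fun_prop
  have hd2 : HasSum (fun k : ℕ => (((2 / P * ∫ z in (0 : ℝ)..P, f z * Real.sin (k * π * z / P)) *
      Real.sin (k * π * y / P) : ℝ) : ℂ)) ((f y : ℝ) : ℂ) := by
    convert! hd using 1
    · ext k
      have e : ((-(k : ℤ) : ℤ) : ℂ) * π * y / P = -(k * π * y / P) := by push_cast; ring
      rw [e, Complex.sin_neg]
      have hk := hJs k
      push_cast at hk ⊢
      linear_combination (-1 / (P : ℂ)) * Complex.I * Complex.sin (k * π * y / P) * hk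
        + 2 / (P : ℂ) * Complex.sin (k * π * y / P) *
          (∫ z in (0 : ℝ)..P, f z * Real.sin (k * π * z / P) : ℝ) * Complex.I_sq
    · simp
  exact_mod_cast hd2

/-- Quadratic decay in the frequency `ω` of the Fourier integral of a sine vanishing at both
ends of `[-1, 1]`. -/
lemma norm_integral_sin_mul_exp_le (ω μ L : ℝ) (hμ : Real.sin (μ * 2) = 0) :
    ω ^ 2 * ‖∫ x in (-1 : ℝ)..1, ((Real.sin (μ * (x + 1)) : ℝ) : ℂ) *
      Complex.exp (((-(ω * (x + L)) : ℝ) : ℂ) * Complex.I)‖ ≤ 2 * |μ| + 2 * μ ^ 2 := by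
  set I := ∫ x in (-1 : ℝ)..1, ((Real.sin (μ * (x + 1)) : ℝ) : ℂ) *
      Complex.exp (((-(ω * (x + L)) : ℝ) : ℂ) * Complex.I) with hI
  set E : ℝ → ℂ := fun x => Complex.exp (((-(ω * (x + L)) : ℝ) : ℂ) * Complex.I) with hE
  have hnE : ∀ x, ‖E x‖ = 1 := fun x => Complex.norm_exp_ofReal_mul_I _
  -- an explicit antiderivative of `(ω ^ 2 - μ ^ 2) * sin (μ * (x + 1)) * E x`
  set G : ℝ → ℂ := fun x => (Complex.I * ω * (Real.sin (μ * (x + 1)) : ℝ) +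
    μ * (Real.cos (μ * (x + 1)) : ℝ)) * E x with hG
  have hderiv : ∀ x : ℝ, HasDerivAt G (((ω : ℂ) ^ 2 - μ ^ 2) *
      (((Real.sin (μ * (x + 1)) : ℝ) : ℂ) * E x)) x := by
    intro x
    have hlin : HasDerivAt (fun x : ℝ => μ * (x + 1)) μ x := by
      simpa using ((hasDerivAt_id x).add_const 1).const_mul μ
    have hs := hlin.sin.ofReal_comp
    have hc := hlin.cos.ofReal_comp
    have hl2 : HasDerivAt (fun x : ℝ => -(ω * (x + L))) (-ω) x := by
      simpa using (((hasDerivAt_id x).add_const L).const_mul (-ω)).congr_of_eventuallyEq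
        (Filter.Eventually.of_forall fun x => (neg_mul ω (x + L)).symm)
    have he : HasDerivAt E _ x := (hl2.ofReal_comp.mul_const Complex.I).cexp
    have h := ((hs.const_mul (Complex.I * ω)).add (hc.const_mul (μ : ℂ))).mul he
    refine h.congr_deriv ?_
    simp only [hE, Pi.add_apply]
    push_cast
    linear_combination (-(ω : ℂ) ^ 2 * Complex.sin (μ * (x + 1)) *
      Complex.exp (-(ω * (x + L)) * Complex.I)) * Complex.I_sq
  have hint : ((ω : ℂ) ^ 2 - μ ^ 2) * I = G 1 - G (-1) := by
    rw [hI, ← intervalIntegral.integral_const_mul]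
    refine intervalIntegral.integral_eq_sub_of_hasDerivAt (fun x _ => hderiv x) ?_
    apply Continuous.intervalIntegrable
    fun_prop
  have hG1 : ‖G 1‖ ≤ |μ| := by
    have : (μ * (1 + 1) : ℝ) = μ * 2 := by ring
    simp only [hG, this, hμ, norm_mul, hnE]
    simp only [Complex.ofReal_zero, mul_zero, zero_add, mul_one, norm_mul, Complex.norm_real,
      Real.norm_eq_abs]
    exact mul_le_of_le_one_right (abs_nonneg _) (Real.abs_cos_le_one _)
  have hG2 : ‖G (-1)‖ ≤ |μ| := by
    simp [hG, hnE]
  have hI2 : ‖I‖ ≤ 2 := by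
    have := intervalIntegral.norm_integral_le_of_norm_le_const (a := (-1 : ℝ)) (b := 1) (C := 1)
      (f := fun x => ((Real.sin (μ * (x + 1)) : ℝ) : ℂ) * E x) (by
        intro x _
        rw [norm_mul, hnE, mul_one, Complex.norm_real]
        exact Real.abs_sin_le_one _)
    calc ‖I‖ ≤ 1 * |1 - (-1)| := this
      _ = 2 := by norm_num
  have key : (ω : ℂ) ^ 2 * I = (G 1 - G (-1)) + (μ : ℂ) ^ 2 * I := by
    linear_combination hint
  calc ω ^ 2 * ‖I‖ = ‖(ω : ℂ) ^ 2 * I‖ := by simp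
    _ ≤ ‖G 1‖ + ‖G (-1)‖ + μ ^ 2 * ‖I‖ := by
        rw [key]
        refine (norm_add_le _ _).trans ?_
        gcongr
        · exact norm_sub_le _ _
        · simp
    _ ≤ |μ| + |μ| + μ ^ 2 * 2 := by gcongr
    _ = _ := by ring

lemma integral_cos_int (j : ℤ) :
    ∫ x in (-1 : ℝ)..1, Real.cos (j * π * (x + 1) / 2) = if j = 0 then 2 else 0 := by
  split_ifs with h
  · subst h; norm_num
  · have hc : (j * π / 2 : ℝ) ≠ 0 := by
      have : (j : ℝ) ≠ 0 := by exact_mod_cast h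
      positivity
    have e : ∀ x : ℝ, j * π * (x + 1) / 2 = (j * π / 2) * x + j * π / 2 := fun x => by ring
    simp only [e]
    rw [intervalIntegral.integral_comp_mul_add (fun x => Real.cos x) hc]
    have e1 : (j * π / 2 * 1 + j * π / 2 : ℝ) = j * π := by ring
    have e2 : (j * π / 2 * (-1) + j * π / 2 : ℝ) = 0 := by ring
    rw [e1, e2, integral_cos, Real.sin_int_mul_pi]
    simp

lemma integral_sin_mul_sin (n m : ℕ) (hn : 1 ≤ n) :
    ∫ x in (-1 : ℝ)..1, Real.sin (n * π * (x + 1) / 2) * Real.sin (m * π * (x + 1) / 2) =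
      if n = m then 1 else 0 := by
  have e : ∀ x : ℝ, Real.sin (n * π * (x + 1) / 2) * Real.sin (m * π * (x + 1) / 2) =
      (1 / 2) * (Real.cos (((n - m : ℤ) : ℝ) * π * (x + 1) / 2) -
        Real.cos (((n + m : ℤ) : ℝ) * π * (x + 1) / 2)) := by
    intro x
    have e1 : ((n - m : ℤ) : ℝ) * π * (x + 1) / 2 =
      n * π * (x + 1) / 2 - m * π * (x + 1) / 2 := by push_cast; ring
    have e2 : ((n + m : ℤ) : ℝ) * π * (x + 1) / 2 =
      n * π * (x + 1) / 2 + m * π * (x + 1) / 2 := by push_cast; ring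
    rw [e1, e2, Real.cos_sub, Real.cos_add]
    ring
  simp only [e]
  rw [intervalIntegral.integral_const_mul, intervalIntegral.integral_sub, integral_cos_int,
    integral_cos_int, if_neg (by omega : ¬ ((n : ℤ) + m = 0))]
  · by_cases h : n = m
    · simp [h]
    · rw [if_neg h, if_neg (by omega)]; simp
  all_goals
    apply Continuous.intervalIntegrable
    fun_prop

/-- Centring the interval `(0, 2 * L)` at the origin and discarding the part where `a` vanishes. -/
lemma integral_shift {E : Type*} [NormedAddCommGroup E] [NormedSpace ℝ E] {a : ℝ → ℝ}
    (hac : Continuous a) (ha0 : ∀ x : ℝ, 1 ≤ |x| → a x = 0) {L : ℝ} (hL : 1 ≤ L) {g : ℝ → E}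
    (hg : Continuous g) :
    ∫ y in (0 : ℝ)..2 * L, a (y - L) • g y = ∫ x in (-1 : ℝ)..1, a x • g (x + L) := by
  have h1 := intervalIntegral.integral_comp_sub_right (a := (0 : ℝ)) (b := 2 * L)
    (fun x => a x • g (x + L)) L
  simp only [sub_add_cancel] at h1
  have hI : ∀ u v : ℝ, IntervalIntegrable (fun x => a x • g (x + L)) MeasureTheory.volume u v :=
    fun u v => Continuous.intervalIntegrable (by fun_prop) u v
  rw [h1, ← intervalIntegral.integral_add_adjacent_intervals (hI _ (-1)) (hI (-1) _),
    ← intervalIntegral.integral_add_adjacent_intervals (hI (-1) 1) (hI 1 _)]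
  have hz : ∀ u v : ℝ, (∀ x ∈ Set.uIcc u v, 1 ≤ |x|) → ∫ x in u..v, a x • g (x + L) = 0 := by
    intro u v h
    rw [intervalIntegral.integral_congr (g := fun _ => (0 : E))]
    · simp
    · intro x hx
      simp [ha0 x (h x hx)]
  rw [hz _ (-1), hz 1 _, zero_add, add_zero]
  · intro x hx
    rw [Set.uIcc_of_le (by linarith)] at hx
    exact hx.1.trans (le_abs_self x)
  · intro x hx
    rw [Set.uIcc_of_le (by linarith)] at hx
    rw [le_abs]; right; linarith [hx.2]



/-- Lemma 1 of the paper (finite-sum form, even `T`): on `(-1,1)` the initial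
displacement `a` equals `(T+1)/T` times the partial sine series of its
zero-extension taken over the indices `k` not divisible by `T+1`. -/
theorem stmt_12 (T : ℕ) (hT : 0 < T) (hTeven : Even T) (N : ℕ) (hN : 0 < N)
    (ac : ℕ → ℝ)
    (a : ℝ → ℝ)
    (ha : ∀ x : ℝ, x ∈ Set.Ioo (-1 : ℝ) 1 →
      a x = ∑ n ∈ Finset.Icc 1 N, ac n * Real.sin ((n : ℝ) * π * (x + 1) / 2))
    (ha0 : ∀ x : ℝ, 1 ≤ |x| → a x = 0)
    (atil : ℕ → ℝ)
    (hatil : ∀ k : ℕ, atil k = (1 / ((T : ℝ) + 1)) *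
      ∫ x in (-1 : ℝ)..1,
        a x * Real.sin ((k : ℝ) * π * (x + 1 + (T : ℝ)) / (2 * ((T : ℝ) + 1)))) :
    ∀ x : ℝ, |x| < 1 →
      ∃ A : ℝ,
        HasSum (fun k : ℕ =>
          if (T + 1) ∣ k then 0
          else atil k * Real.sin ((k : ℝ) * π * (x + 1 + (T : ℝ)) / (2 * ((T : ℝ) + 1)))) A ∧
        a x = (((T : ℝ) + 1) / (T : ℝ)) * A := by
  intro x hx
  rw [abs_lt] at hx
  have hTR : (0 : ℝ) < T := by exact_mod_cast hT
  set L : ℝ := (T : ℝ) + 1 with hLdef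
  have hL1 : 1 ≤ L := by linarith
  have hL0 : 0 < L := by linarith
  -- The projection onto `[-1, 1]` replaces `x` in the sine sum: this gives the formula on all of `ℝ`.
  have hclamp : a = fun x => ∑ n ∈ Finset.Icc 1 N,
      ac n * Real.sin ((n : ℝ) * π * (max (-1) (min 1 x) + 1) / 2) := by
    ext x
    by_cases h : |x| < 1
    · rw [abs_lt] at h
      rw [ha x h, min_eq_right h.2.le, max_eq_right h.1.le]
    · rw [not_lt] at h
      rw [ha0 x h]
      refine (Finset.sum_eq_zero fun n _ => ?_).symm
      rcases le_abs.mp h with h' | h'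
      · have e : (n : ℝ) * π * (max (-1) (min 1 x) + 1) / 2 = n * π := by
          rw [min_eq_left h', max_eq_right (by norm_num)]; ring
        rw [e, Real.sin_nat_mul_pi, mul_zero]
      · have e : (n : ℝ) * π * (max (-1) (min 1 x) + 1) / 2 = 0 := by
          rw [min_eq_right (by linarith), max_eq_left (by linarith)]; ring
        rw [e, Real.sin_zero, mul_zero]
  have hacont : Continuous a := by
    rw [hclamp]; fun_prop
  have haIcc : ∀ x ∈ Set.uIcc (-1 : ℝ) 1,
      a x = ∑ n ∈ Finset.Icc 1 N, ac n * Real.sin ((n : ℝ) * π * (x + 1) / 2) := by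
    intro x hx
    rw [Set.uIcc_of_le (by norm_num)] at hx
    rw [hclamp]
    simp only [min_eq_right hx.2, max_eq_right hx.1]
  have hdecay : ∀ k : ℤ, (k : ℝ) ^ 2 * ‖∫ z in (0 : ℝ)..2 * L, ((a (z - L) : ℝ) : ℂ) *
      Complex.exp (((-(k * π * z / (2 * L)) : ℝ) : ℂ) * Complex.I)‖ ≤
      (2 * L / π) ^ 2 * ∑ n ∈ Finset.Icc 1 N,
        |ac n| * (2 * |(n : ℝ) * π / 2| + 2 * ((n : ℝ) * π / 2) ^ 2) := by
    intro k
    set ω : ℝ := k * π / (2 * L) with hω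
    have e1 := integral_shift hacont ha0 hL1
      (g := fun z => Complex.exp (((-(k * π * z / (2 * L)) : ℝ) : ℂ) * Complex.I)) (by fun_prop)
    simp only [Complex.real_smul] at e1
    have e2 : ∫ x in (-1 : ℝ)..1, ((a x : ℝ) : ℂ) *
        Complex.exp (((-(k * π * (x + L) / (2 * L)) : ℝ) : ℂ) * Complex.I) =
        ∑ n ∈ Finset.Icc 1 N, (ac n : ℂ) * ∫ x in (-1 : ℝ)..1,
          ((Real.sin ((n : ℝ) * π / 2 * (x + 1)) : ℝ) : ℂ) *
          Complex.exp (((-(ω * (x + L)) : ℝ) : ℂ) * Complex.I) := by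
      simp_rw [← intervalIntegral.integral_const_mul]
      rw [← intervalIntegral.integral_finsetSum]
      · refine intervalIntegral.integral_congr fun x hx => ?_
        have e3 : k * π * (x + L) / (2 * L) = ω * (x + L) := by rw [hω]; ring
        rw [haIcc x hx, e3, Complex.ofReal_sum, Finset.sum_mul]
        refine Finset.sum_congr rfl fun n _ => ?_
        have e4 : (n : ℝ) * π * (x + 1) / 2 = (n : ℝ) * π / 2 * (x + 1) := by ring
        rw [e4, Complex.ofReal_mul, mul_assoc]
      · intro n _
        apply Continuous.intervalIntegrable
        fun_prop
    have e5 : (k : ℝ) ^ 2 = (2 * L / π) ^ 2 * ω ^ 2 := by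
      rw [hω]; field_simp
    rw [e1, e2, e5, mul_assoc]
    gcongr
    calc _ ≤ ω ^ 2 * ∑ n ∈ Finset.Icc 1 N, |ac n| * ‖∫ x in (-1 : ℝ)..1,
          ((Real.sin ((n : ℝ) * π / 2 * (x + 1)) : ℝ) : ℂ) *
          Complex.exp (((-(ω * (x + L)) : ℝ) : ℂ) * Complex.I)‖ := by
          gcongr
          refine (norm_sum_le _ _).trans (Finset.sum_le_sum fun n _ => ?_)
          rw [norm_mul, Complex.norm_real, Real.norm_eq_abs]
      _ ≤ _ := by
          rw [Finset.mul_sum]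
          refine Finset.sum_le_sum fun n _ => ?_
          rw [mul_left_comm]
          gcongr
          apply norm_integral_sin_mul_exp_le
          rw [div_mul_cancel₀ _ two_ne_zero, Real.sin_nat_mul_pi]
  have hfull := hasSum_sine_series (P := 2 * L) (by linarith) (f := fun y => a (y - L))
    (by fun_prop) (fun y hy => ha0 _ (by
      by_contra! h
      rw [abs_lt] at h
      exact hy ⟨by linarith, by linarith⟩)) hdecay (y := x + L)
    ⟨by linarith, by linarith⟩
  set t : ℕ → ℝ := fun k =>
    atil k * Real.sin ((k : ℝ) * π * (x + 1 + (T : ℝ)) / (2 * L)) with ht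
  have htfull : HasSum t (a x) := by
    convert! hfull using 1
    · ext k
      have e1 := integral_shift hacont ha0 hL1
        (g := fun z => Real.sin (k * π * z / (2 * L))) (by fun_prop)
      simp only [smul_eq_mul] at e1
      rw [e1]
      simp only [ht]
      rw [hatil]
      have e2 : ∀ z : ℝ, z + 1 + (T : ℝ) = z + L := fun z => by rw [hLdef]; ring
      simp only [e2]
      congr 2
      field_simp
    · simp
  -- On the indices `(T + 1) * m` the series reproduces the original modes, scaled by `1 / (T + 1)`.
  have hmult : ∀ m : ℕ, t ((T + 1) * m) =
      if m ∈ Finset.Icc 1 N then 1 / L * (ac m * Real.sin ((m : ℝ) * π * (x + 1) / 2)) else 0 := by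
    intro m
    obtain ⟨s, hs⟩ := hTeven
    -- evenness of `T` makes the phase shift `m * π * T / 2` an integer multiple of `π`
    have hphase : ∀ z : ℝ, Real.sin ((((T + 1) * m : ℕ) : ℝ) * π * (z + 1 + (T : ℝ)) / (2 * L)) =
        (-1) ^ (m * s) * Real.sin ((m : ℝ) * π * (z + 1) / 2) := by
      intro z
      have e : (((T + 1) * m : ℕ) : ℝ) * π * (z + 1 + (T : ℝ)) / (2 * L) =
          (m : ℝ) * π * (z + 1) / 2 + ((m * s : ℕ) : ℝ) * π := by
        have hs' : (T : ℝ) = s + s := by exact_mod_cast hs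
        have hc : (((T + 1) * m : ℕ) : ℝ) = L * m := by push_cast; rw [hLdef]
        rw [hc, hs']
        push_cast
        field_simp
        ring
      rw [e, Real.sin_add_nat_mul_pi]
    have hsq : ((-1 : ℝ) ^ (m * s)) * (-1) ^ (m * s) = 1 := by
      rw [← mul_pow]; norm_num
    have hint : ∫ z in (-1 : ℝ)..1, a z * ((-1) ^ (m * s) * Real.sin ((m : ℝ) * π * (z + 1) / 2)) =
        (-1) ^ (m * s) * if m ∈ Finset.Icc 1 N then ac m else 0 := by
      have e : ∫ z in (-1 : ℝ)..1,
          a z * ((-1) ^ (m * s) * Real.sin ((m : ℝ) * π * (z + 1) / 2)) =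
          ∫ z in (-1 : ℝ)..1, (-1) ^ (m * s) * ∑ n ∈ Finset.Icc 1 N, ac n *
            (Real.sin ((n : ℝ) * π * (z + 1) / 2) * Real.sin ((m : ℝ) * π * (z + 1) / 2)) := by
        refine intervalIntegral.integral_congr fun z hz => ?_
        rw [haIcc z hz, mul_left_comm, Finset.sum_mul]
        simp only [mul_assoc]
      rw [e, intervalIntegral.integral_const_mul, intervalIntegral.integral_finsetSum]
      · congr 1
        rw [← Finset.sum_ite_eq' (Finset.Icc 1 N) m ac]
        refine Finset.sum_congr rfl fun n hn => ?_
        rw [intervalIntegral.integral_const_mul,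
          integral_sin_mul_sin n m (Finset.mem_Icc.mp hn).1]
        simp
      · intro n _
        apply Continuous.intervalIntegrable
        fun_prop
    simp only [ht]
    rw [hatil]
    simp only [hphase, hint]
    split_ifs
    · linear_combination (1 / L * ac m * Real.sin ((m : ℝ) * π * (x + 1) / 2)) * hsq
    · simp
  have hsub : HasSum (fun k => if (T + 1) ∣ k then t k else 0) (1 / L * a x) := by
    have hinj : Function.Injective (fun m : ℕ => (T + 1) * m) :=
      fun m n h => Nat.eq_of_mul_eq_mul_left (Nat.succ_pos T) h
    rw [← hinj.hasSum_iff]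
    · have e : 1 / L * a x = ∑ m ∈ Finset.Icc 1 N, t ((T + 1) * m) := by
        rw [ha x hx, Finset.mul_sum]
        refine Finset.sum_congr rfl fun m hm => ?_
        rw [hmult, if_pos hm]
      rw [e]
      convert! hasSum_sum_of_ne_finset_zero (f := fun m => t ((T + 1) * m)) (s := Finset.Icc 1 N)
        (fun m hm => by rw [hmult, if_neg hm]) using 1
      · ext m
        simp
      · infer_instance
    · intro k hk
      rw [if_neg]
      rintro ⟨m, rfl⟩
      exact hk ⟨m, rfl⟩
  refine ⟨a x - 1 / L * a x, ?_, ?_⟩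
  · convert! htfull.sub hsub using 1
    ext k
    split_ifs <;> simp [ht]
  · have : (T : ℝ) = L - 1 := by rw [hLdef]; ring
    rw [this]
    have h3 : L - 1 ≠ 0 := by linarith
    field_simp
end

section
/- Let T be an even positive integer, N a positive integer, and a_1,…,a_N real numbers. Define a : ℝ → ℝ by a(x) = Σ_{n=1}^{N} a_n sin(nπ(x+1)/2) for x ∈ (−1,1) and a(x) = 0 for |x| ≥ 1, and for every positive integer k define ã_k = (1/(T+1)) ∫_{−1}^{1} a(x) sin(kπ(x+1+T)/(2(T+1))) dx. Suppose F̂ : (0, 2(T+1)) → ℝ is integrable and its cosine coefficients F̂_k = (1/(T+1)) ∫_0^{2(T+1)} F̂(t) cos(kπt/(2(T+1))) dt satisfy F̂_k = ã_k · sin(kπ(2+T)/(2(T+1))) for every positive integer k. Then for every x with |x| < 1: a(x) = ((T+1)/T) · Σ_{k ≥ 1, (T+1) ∤ k} ( F̂_k / sin(kπ(2+T)/(2(T+1))) ) · sin(kπ(x+1+T)/(2(T+1))), where the series converges and each denominator sin(kπ(2+T)/(2(T+1))) is nonzero for (T+1) ∤ k. -/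
open Real

/-!
Write `L = T + 1`. The zero-extension of `a` to `(-L, L)`, shifted by `L` and extended oddly, is a
continuous `4L`-periodic function whose Fourier series is the sine series with coefficients `ã_k`
(`fourierCoeff_oddExt`). Each mode `sin (nπ(x+1)/2)` vanishes at `±1`, so integrating by parts
twice gives `ã_k = O(1/k²)` (`abs_integral_sin_mul_sin_le`); hence the series converges absolutely
and sums to `a x` for `|x| < 1` (`hasSum_sine`).

The division by `sin (kπ(2+T)/(2(T+1)))` loses only the terms with `L ∣ k`, because `T + 1` and
`T/2 + 1` are coprime (`sin_ne_zero_of_not_dvd`). Since `T` is even, the sine of index `k = mL` is,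
up to a sign, the mode `sin (mπ(x+1)/2)` on `(-1, 1)` (`sin_multiple`), so by orthogonality
(`integral_sin_mode`) the lost terms are the terms of `a` itself divided by `L`. What remains
sums to `a x - a x / L = a x * T / (T + 1)`.
-/

/-- For `a` supported in `[-1, 1]`, the function `y ↦ a (y - L) - a (-y - L)` on `[-2L, 2L]` is the
odd extension of `y ↦ a (y - L)` from `[0, 2L]`; its complex Fourier coefficients are `-i/2` times
the sine coefficients of `a` on `(-L, L)`. -/
theorem fourierCoeff_oddExt {L : ℝ} [hF : Fact (0 < 4 * L)] (hL : 1 ≤ L) {a : ℝ → ℝ}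
    (hc : Continuous a) (ha0 : ∀ x : ℝ, 1 ≤ |x| → a x = 0) (n : ℤ) :
    fourierCoeff (AddCircle.liftIco (4 * L) (-(2 * L))
        (fun y : ℝ => ((a (y - L) - a (-y - L) : ℝ) : ℂ))) n =
      -(Complex.I / 2) *
        ((1 / L * ∫ x in (-1 : ℝ)..1, a x * sin (n * π * (x + L) / (2 * L)) : ℝ) : ℂ) := by
  have hL0 : L ≠ 0 := by positivity
  set e : ℝ → ℂ := fun y => Complex.exp ((-(n * π * y / (2 * L)) : ℝ) * Complex.I) with he
  have hec : Continuous e := by fun_prop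
  have hsup : ∫ x in (-(2 * L) - L)..(2 * L - L), a x * sin (n * π * (x + L) / (2 * L)) =
      ∫ x in (-1 : ℝ)..1, a x * sin (n * π * (x + L) / (2 * L)) := by
    have hint : ∀ u v : ℝ, IntervalIntegrable
        (fun x => a x * sin (n * π * (x + L) / (2 * L))) MeasureTheory.volume u v :=
      fun u v => Continuous.intervalIntegrable (by fun_prop) u v
    have h1 : ∫ x in (-(2 * L) - L)..(-1), a x * sin (n * π * (x + L) / (2 * L)) = 0 := by
      refine intervalIntegral.integral_zero_ae (Filter.Eventually.of_forall fun x hx => ?_)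
      rw [Set.uIoc_of_le (by linarith)] at hx
      rw [ha0 x (by rw [abs_of_nonpos] <;> linarith [hx.2]), zero_mul]
    have h2 : ∫ x in (1 : ℝ)..(2 * L - L), a x * sin (n * π * (x + L) / (2 * L)) = 0 := by
      refine intervalIntegral.integral_zero_ae (Filter.Eventually.of_forall fun x hx => ?_)
      rw [Set.uIoc_of_le (by linarith)] at hx
      rw [ha0 x (by rw [abs_of_nonneg] <;> linarith [hx.1]), zero_mul]
    rw [← intervalIntegral.integral_add_adjacent_intervals (hint _ (-1)) (hint (-1) _), h1,
      ← intervalIntegral.integral_add_adjacent_intervals (hint (-1) 1) (hint 1 _), h2]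
    ring
  have hcoef : ∫ y in (-(2 * L))..(2 * L), e y * ((a (y - L) - a (-y - L) : ℝ) : ℂ) =
      ((∫ x in (-1 : ℝ)..1, a x * sin (n * π * (x + L) / (2 * L)) : ℝ) : ℂ) *
        (-2 * Complex.I) := by
    have h1 : ∫ y in (-(2 * L))..(2 * L), e y * (a (-y - L) : ℂ) =
        ∫ y in (-(2 * L))..(2 * L), e (-y) * (a (y - L) : ℂ) := by
      simpa using intervalIntegral.integral_comp_neg (a := -(2 * L)) (b := 2 * L)
        (fun y => e (-y) * (a (y - L) : ℂ))
    calc _ = (∫ y in (-(2 * L))..(2 * L), e y * (a (y - L) : ℂ)) -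
          ∫ y in (-(2 * L))..(2 * L), e y * (a (-y - L) : ℂ) := by
            rw [← intervalIntegral.integral_sub
              (Continuous.intervalIntegrable (by fun_prop) _ _)
              (Continuous.intervalIntegrable (by fun_prop) _ _)]
            simp [mul_sub]
      _ = ∫ y in (-(2 * L))..(2 * L),
          ((a (y - L) * sin (n * π * (y - L + L) / (2 * L)) : ℝ) : ℂ) * (-2 * Complex.I) := by
            rw [h1, ← intervalIntegral.integral_sub
              (Continuous.intervalIntegrable (by fun_prop) _ _)
              (Continuous.intervalIntegrable (by fun_prop) _ _)]
            congr 1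
            ext y
            have : e y - e (-y) = -2 * Complex.I * (sin (n * π * y / (2 * L)) : ℝ) := by
              simp only [he, Complex.exp_ofReal_mul_I, mul_neg, neg_div, neg_neg, Real.cos_neg,
                Real.sin_neg]
              push_cast
              ring
            rw [← sub_mul, this, sub_add_cancel]
            push_cast
            ring
      _ = _ := by
            rw [intervalIntegral.integral_mul_const, intervalIntegral.integral_ofReal,
              intervalIntegral.integral_comp_sub_right
                (fun x => a x * sin (n * π * (x + L) / (2 * L))), hsup]
  rw [fourierCoeff_eq_intervalIntegral _ _ (-(2 * L)),
    show -(2 * L) + 4 * L = 2 * L by ring]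
  have hcongr : ∫ y in (-(2 * L))..(2 * L), fourier (-n) (y : AddCircle (4 * L)) •
      AddCircle.liftIco (4 * L) (-(2 * L))
        (fun y : ℝ => ((a (y - L) - a (-y - L) : ℝ) : ℂ)) (y : AddCircle (4 * L)) =
      ∫ y in (-(2 * L))..(2 * L), e y * ((a (y - L) - a (-y - L) : ℝ) : ℂ) := by
    refine intervalIntegral.integral_congr_Ioo_of_le (by linarith) fun y hy => ?_
    rw [AddCircle.liftIco_coe_apply ⟨hy.1.le, by linarith [hy.2]⟩, smul_eq_mul,
      fourier_coe_apply]
    congr 2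
    have : (L : ℂ) ≠ 0 := by exact_mod_cast hL0
    push_cast
    field_simp
    ring
  rw [hcongr, hcoef, Complex.real_smul]
  have : (L : ℂ) ≠ 0 := by exact_mod_cast hL0
  push_cast
  field_simp
  ring

/-- A continuous function supported in `[-1, 1]` is the sum of its sine series on `(-L, L)` when the
coefficients are summable. -/
theorem hasSum_sine {L : ℝ} (hL : 1 ≤ L) {a : ℝ → ℝ} (hc : Continuous a)
    (ha0 : ∀ x : ℝ, 1 ≤ |x| → a x = 0) {b : ℕ → ℝ}
    (hb : ∀ k : ℕ, b k = 1 / L * ∫ x in (-1 : ℝ)..1, a x * sin (k * π * (x + L) / (2 * L)))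
    (hs : Summable b) {x : ℝ} (hx : |x| < 1) :
    HasSum (fun k : ℕ => b k * sin (k * π * (x + L) / (2 * L))) (a x) := by
  have hL0 : L ≠ 0 := by positivity
  have hLc : (L : ℂ) ≠ 0 := by exact_mod_cast hL0
  have : Fact (0 < 4 * L) := ⟨by positivity⟩
  have hx' := abs_lt.1 hx
  set h : ℝ → ℂ := fun y : ℝ => ((a (y - L) - a (-y - L) : ℝ) : ℂ) with hh
  have hcont : Continuous (AddCircle.liftIco (4 * L) (-(2 * L)) h) := by
    refine AddCircle.liftIco_continuous ?_ (by fun_prop)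
    simp only [hh]
    rw [ha0 (-(2 * L) - L) (by rw [abs_of_nonpos] <;> linarith),
      ha0 (- -(2 * L) - L) (by rw [abs_of_nonneg] <;> linarith),
      ha0 (-(2 * L) + 4 * L - L) (by rw [abs_of_nonneg] <;> linarith),
      ha0 (-(-(2 * L) + 4 * L) - L) (by rw [abs_of_nonpos] <;> linarith)]
  have hpos : ∀ k : ℕ, fourierCoeff (AddCircle.liftIco (4 * L) (-(2 * L)) h) (k : ℤ) =
      -(Complex.I / 2) * (b k : ℂ) := fun k => by
    rw [hb k, fourierCoeff_oddExt hL hc ha0]; simp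
  have hneg : ∀ k : ℕ, fourierCoeff (AddCircle.liftIco (4 * L) (-(2 * L)) h) (-(k : ℤ)) =
      Complex.I / 2 * (b k : ℂ) := fun k => by
    rw [hb k, fourierCoeff_oddExt hL hc ha0]
    simp [neg_mul, neg_div, intervalIntegral.integral_neg]
  have hsc : Summable (fun k : ℕ => (b k : ℂ)) := by exact_mod_cast hs
  have hsum : Summable (fourierCoeff (AddCircle.liftIco (4 * L) (-(2 * L)) h)) := by
    refine Summable.of_nat_of_neg ?_ ?_
    · simpa only [hpos] using hsc.mul_left _
    · simpa only [hneg] using hsc.mul_left _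
  have key := (has_pointwise_sum_fourier_series_of_summable (f := ⟨_, hcont⟩) hsum
    ((x + L : ℝ) : AddCircle (4 * L))).nat_add_neg
  have hb0 : b 0 = 0 := by rw [hb]; simp
  have h0 := hpos 0
  simp only [Nat.cast_zero, hb0, Complex.ofReal_zero, mul_zero] at h0
  simp only [ContinuousMap.coe_mk, h0, zero_smul, add_zero] at key
  rw [AddCircle.liftIco_coe_apply ⟨by linarith, by linarith⟩] at key
  simp only [hh, add_sub_cancel_right] at key
  rw [ha0 (-(x + L) - L) (by rw [abs_of_nonpos] <;> linarith), sub_zero] at key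
  rw [← Complex.hasSum_ofReal]
  refine key.congr_fun fun k => ?_
  have hexp : ∀ j : ℤ, fourier j ((x + L : ℝ) : AddCircle (4 * L)) =
      Complex.exp ((j * π * (x + L) / (2 * L) : ℝ) * Complex.I) := fun j => by
    rw [fourier_coe_apply]
    congr 1
    push_cast
    field_simp
    ring
  rw [hpos, hneg, hexp, hexp, Complex.exp_ofReal_mul_I, Complex.exp_ofReal_mul_I]
  push_cast
  simp only [neg_mul, neg_div, Complex.cos_neg, Complex.sin_neg, smul_eq_mul]
  ring_nf
  simp only [Complex.I_sq]
  ring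

/-- With `f = sin (A (x + 1))` and `g = sin (B x + c)`, the derivative of `f' g - f g'` is
`f'' g - f g'' = (B² - A²) f g`. -/
theorem hasDerivAt_wronskian (A B c x : ℝ) :
    HasDerivAt (fun x => A * cos (A * (x + 1)) * sin (B * x + c)
      - B * sin (A * (x + 1)) * cos (B * x + c))
      ((B ^ 2 - A ^ 2) * (sin (A * (x + 1)) * sin (B * x + c))) x := by
  have h1 : HasDerivAt (fun x : ℝ => A * (x + 1)) A x := by
    simpa using ((hasDerivAt_id x).add_const 1).const_mul A
  have h2 : HasDerivAt (fun x : ℝ => B * x + c) B x := by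
    simpa using ((hasDerivAt_id x).const_mul B).add_const c
  exact (((h1.cos.const_mul A).mul h2.sin).sub ((h1.sin.const_mul B).mul h2.cos)).congr_deriv
    (by ring)

theorem integral_sin_mul_sin_s13 {A B c : ℝ} (hA : sin (A * 2) = 0) :
    (B ^ 2 - A ^ 2) * ∫ x in (-1 : ℝ)..1, sin (A * (x + 1)) * sin (B * x + c) =
      A * cos (A * 2) * sin (B + c) - A * sin (-B + c) := by
  rw [← intervalIntegral.integral_const_mul,
    intervalIntegral.integral_eq_sub_of_hasDerivAt (fun x _ => hasDerivAt_wronskian A B c x)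
      (Continuous.intervalIntegrable (by fun_prop) _ _)]
  norm_num [hA]

/-- The `O(1/B²)` decay, in a form that also covers the resonant case `B = ±A`. -/
theorem abs_integral_sin_mul_sin_le {A B c : ℝ} (hA : sin (A * 2) = 0) :
    B ^ 2 * |∫ x in (-1 : ℝ)..1, sin (A * (x + 1)) * sin (B * x + c)| ≤ 2 * |A| + 2 * A ^ 2 := by
  set I := ∫ x in (-1 : ℝ)..1, sin (A * (x + 1)) * sin (B * x + c) with hI
  have h2 : |I| ≤ 2 := by
    have := intervalIntegral.norm_integral_le_of_norm_le_const (a := -1) (b := 1) (C := 1)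
      (f := fun x => sin (A * (x + 1)) * sin (B * x + c)) (fun x _ => by
        rw [norm_mul]
        exact mul_le_one₀ (abs_sin_le_one _) (norm_nonneg _) (abs_sin_le_one _))
    norm_num at this
    simpa [hI] using this
  have h3 : B ^ 2 * I = A * (cos (A * 2) * sin (B + c)) - A * sin (-B + c) + A ^ 2 * I := by
    linarith [integral_sin_mul_sin_s13 (B := B) (c := c) hA]
  have h4 : |A * (cos (A * 2) * sin (B + c))| ≤ |A| := by
    rw [abs_mul, abs_mul]
    exact mul_le_of_le_one_right (abs_nonneg _)
      (mul_le_one₀ (abs_cos_le_one _) (abs_nonneg _) (abs_sin_le_one _))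
  have h5 : |A * sin (-B + c)| ≤ |A| := by
    rw [abs_mul]
    exact mul_le_of_le_one_right (abs_nonneg _) (abs_sin_le_one _)
  have h6 : |A ^ 2 * I| ≤ 2 * A ^ 2 := by
    rw [abs_mul, abs_of_nonneg (sq_nonneg A)]
    nlinarith [sq_nonneg A]
  calc B ^ 2 * |I| = |B ^ 2 * I| := by rw [abs_mul, abs_of_nonneg (sq_nonneg B)]
    _ ≤ _ := by
      rw [h3]
      refine (abs_add_le _ _).trans ?_
      linarith [abs_sub (A * (cos (A * 2) * sin (B + c))) (A * sin (-B + c))]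

theorem sin_pi_half_mul_two (n : ℕ) : sin (n * π / 2 * 2) = 0 := by
  rw [div_mul_cancel₀ _ two_ne_zero, sin_nat_mul_pi]

theorem integral_sin_mode (m n : ℕ) (hm : 1 ≤ m) :
    ∫ x in (-1 : ℝ)..1, sin (n * π / 2 * (x + 1)) * sin (m * π / 2 * (x + 1)) =
      if n = m then 1 else 0 := by
  split_ifs with h
  · subst h
    have hne : (n : ℝ) * π / 2 ≠ 0 := by positivity
    have : ∫ x in (-1 : ℝ)..1, sin (n * π / 2 * (x + 1)) * sin (n * π / 2 * (x + 1)) =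
        ∫ x in (-1 : ℝ)..1, sin (n * π / 2 * x + n * π / 2) ^ 2 := by
      congr 1; ext x; ring_nf
    rw [this, intervalIntegral.integral_comp_mul_add (fun x => sin x ^ 2) hne, integral_sin_sq]
    have h1 : sin ((n : ℝ) * π / 2 * 1 + n * π / 2) = 0 := by
      rw [← sin_nat_mul_pi n]; ring_nf
    have h2 : (n : ℝ) * π / 2 * (-1) + n * π / 2 = 0 := by ring
    rw [h1, h2, sin_zero, smul_eq_mul]
    field_simp
    ring
  · have := integral_sin_mul_sin_s13 (A := n * π / 2) (B := m * π / 2) (c := m * π / 2)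
      (sin_pi_half_mul_two n)
    rw [show (m : ℝ) * π / 2 + m * π / 2 = m * π by ring, sin_nat_mul_pi,
      show -((m : ℝ) * π / 2) + m * π / 2 = 0 by ring, sin_zero, mul_zero, mul_zero, sub_zero,
      mul_eq_zero] at this
    refine (this.resolve_left fun h0 => h ?_) ▸ ?_
    · have h1 : (m : ℝ) ^ 2 = n ^ 2 := by
        have : ((m : ℝ) ^ 2 - n ^ 2) * (π ^ 2 / 4) = 0 := by linarith
        have := (mul_eq_zero.1 this).resolve_right (by positivity)
        linarith
      have := (sq_eq_sq₀ (by positivity) (by positivity)).1 h1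
      exact_mod_cast this.symm
    · congr 1; ext x; ring_nf

theorem sin_ne_zero_of_not_dvd {T : ℕ} (hT : Even T) {k : ℕ} (hk : ¬ (T + 1) ∣ k) :
    sin ((k : ℝ) * π * (2 + (T : ℝ)) / (2 * ((T : ℝ) + 1))) ≠ 0 := by
  intro h
  obtain ⟨j, hj⟩ := sin_eq_zero_iff.1 h
  obtain ⟨s, rfl⟩ := hT
  apply hk
  have hT1 : ((s + s : ℕ) : ℝ) + 1 ≠ 0 := by positivity
  have h1 : (j : ℝ) * (2 * ((s + s : ℕ) + 1)) = k * (2 + (s + s : ℕ)) := by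
    field_simp at hj
    linarith
  have h2 : ((s : ℤ) + s + 1) * j = k * (s + 1) := by
    have : (((s : ℤ) + s + 1) * j * 2 : ℝ) = k * (s + 1) * 2 := by
      push_cast at h1 ⊢
      linarith
    exact_mod_cast mul_right_cancel₀ two_ne_zero this
  have hcop : IsCoprime ((s : ℤ) + s + 1) (s + 1) := ⟨-1, 2, by ring⟩
  have := hcop.dvd_of_dvd_mul_right (Dvd.intro j h2)
  exact_mod_cast this

/-- On the index `m (T + 1)` with `T` even, the sine basis of `(-(T+1), T+1)` restricts, up to sign,
to the sine basis of `(-1, 1)`. -/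
theorem sin_multiple {T : ℕ} (hT : Even T) (m : ℕ) (x : ℝ) :
    sin (((m * (T + 1) : ℕ) : ℝ) * π * (x + 1 + T) / (2 * ((T : ℝ) + 1))) =
      (-1) ^ (m * (T / 2)) * sin (m * π / 2 * (x + 1)) := by
  obtain ⟨s, rfl⟩ := hT
  have hT1 : ((s + s : ℕ) : ℝ) + 1 ≠ 0 := by positivity
  rw [show (s + s) / 2 = s by omega, ← sin_add_nat_mul_pi]
  congr 1
  push_cast at hT1 ⊢
  field_simp
  ring

/-- Proposition 1 of the paper (finite-sum form, even `T`): the initial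
displacement `a` is recovered from the cosine Fourier coefficients `F̂_k` of
the glued boundary observation `F̂` by dividing by `sin(kπ(2+T)/(2(T+1)))`
over the indices `k` not divisible by `T+1` and summing the resulting sine
series, multiplied by `(T+1)/T`. -/
theorem stmt_13 (T : ℕ) (hT : 0 < T) (hTeven : Even T) (N : ℕ) (hN : 0 < N)
    (ac : ℕ → ℝ)
    (a : ℝ → ℝ)
    (ha : ∀ x : ℝ, x ∈ Set.Ioo (-1 : ℝ) 1 →
      a x = ∑ n ∈ Finset.Icc 1 N, ac n * Real.sin ((n : ℝ) * π * (x + 1) / 2))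
    (ha0 : ∀ x : ℝ, 1 ≤ |x| → a x = 0)
    (atil : ℕ → ℝ)
    (hatil : ∀ k : ℕ, atil k = (1 / ((T : ℝ) + 1)) *
      ∫ x in (-1 : ℝ)..1,
        a x * Real.sin ((k : ℝ) * π * (x + 1 + (T : ℝ)) / (2 * ((T : ℝ) + 1))))
    (F : ℝ → ℝ)
    (hFint : MeasureTheory.IntegrableOn F (Set.Ioo (0 : ℝ) (2 * ((T : ℝ) + 1))))
    (Fc : ℕ → ℝ)
    (hFc : ∀ k : ℕ, Fc k = (1 / ((T : ℝ) + 1)) *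
      ∫ t in (0 : ℝ)..(2 * ((T : ℝ) + 1)),
        F t * Real.cos ((k : ℝ) * π * t / (2 * ((T : ℝ) + 1))))
    (hip : ∀ k : ℕ, 1 ≤ k →
      Fc k = atil k * Real.sin ((k : ℝ) * π * (2 + (T : ℝ)) / (2 * ((T : ℝ) + 1)))) :
    ∀ x : ℝ, |x| < 1 →
      (∀ k : ℕ, 1 ≤ k → ¬ (T + 1) ∣ k →
        Real.sin ((k : ℝ) * π * (2 + (T : ℝ)) / (2 * ((T : ℝ) + 1))) ≠ 0) ∧
      ∃ A : ℝ,
        HasSum (fun k : ℕ =>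
          if (T + 1) ∣ k then 0
          else (Fc k / Real.sin ((k : ℝ) * π * (2 + (T : ℝ)) / (2 * ((T : ℝ) + 1)))) *
            Real.sin ((k : ℝ) * π * (x + 1 + (T : ℝ)) / (2 * ((T : ℝ) + 1)))) A ∧
        a x = (((T : ℝ) + 1) / (T : ℝ)) * A := by
  intro x hx
  refine ⟨fun k _ hk => sin_ne_zero_of_not_dvd hTeven hk, ?_⟩
  have hT0 : (T : ℝ) ≠ 0 := by positivity
  have hL1 : (1 : ℝ) ≤ T + 1 := by linarith [(Nat.cast_nonneg T : (0 : ℝ) ≤ T)]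
  have hL0 : (T : ℝ) + 1 ≠ 0 := by positivity
  -- the finite sum also represents `a` at the end points, where both sides vanish
  have ha' : ∀ x ∈ Set.Icc (-1 : ℝ) 1,
      a x = ∑ n ∈ Finset.Icc 1 N, ac n * sin (n * π / 2 * (x + 1)) := by
    intro x hx
    rcases hx.1.eq_or_lt with h | h
    · rw [← h, ha0 _ (by norm_num)]
      simp
    rcases hx.2.eq_or_lt with h' | h'
    · rw [h', ha0 _ (by norm_num), Finset.sum_eq_zero]
      intro n _
      rw [one_add_one_eq_two, sin_pi_half_mul_two, mul_zero]
    · rw [ha x ⟨h, h'⟩]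
      refine Finset.sum_congr rfl fun n _ => ?_
      ring_nf
  have hint : ∀ g : ℝ → ℝ, Continuous g → ∫ x in (-1 : ℝ)..1, a x * g x =
      ∑ n ∈ Finset.Icc 1 N, ac n * ∫ x in (-1 : ℝ)..1, sin (n * π / 2 * (x + 1)) * g x := by
    intro g hg
    rw [intervalIntegral.integral_congr (g := fun x => ∑ n ∈ Finset.Icc 1 N,
      ac n * (sin (n * π / 2 * (x + 1)) * g x)), intervalIntegral.integral_finsetSum]
    · simp_rw [intervalIntegral.integral_const_mul]
    · exact fun n _ => Continuous.intervalIntegrable (by fun_prop) _ _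
    · intro x hx
      rw [Set.uIcc_of_le (by norm_num)] at hx
      beta_reduce
      rw [ha' x hx, Finset.sum_mul]
      exact Finset.sum_congr rfl fun n _ => by ring
  have hcont : Continuous a := by
    -- `a` is the finite sum precomposed with the projection of `ℝ` onto `[-1, 1]`
    have : a = fun x => ∑ n ∈ Finset.Icc 1 N,
        ac n * sin (n * π / 2 * (max (-1) (min 1 x) + 1)) := by
      ext x
      rw [← ha' _ ⟨le_max_left _ _, max_le (by norm_num) (min_le_left _ _)⟩]
      rcases le_or_gt 1 |x| with h | h
      · rw [ha0 x h]
        rcases le_abs.1 h with h | h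
        · rw [min_eq_left h, max_eq_right (by norm_num), ha0 _ (by norm_num)]
        · rw [min_eq_right (by linarith), max_eq_left (by linarith), ha0 _ (by norm_num)]
      · have := abs_lt.1 h
        rw [min_eq_right this.2.le, max_eq_right this.1.le]
    rw [this]
    fun_prop
  have hb : ∀ k : ℕ, atil k = 1 / ((T : ℝ) + 1) *
      ∫ x in (-1 : ℝ)..1, a x * sin (k * π * (x + (T + 1)) / (2 * ((T : ℝ) + 1))) := by
    intro k
    rw [hatil]
    simp_rw [add_right_comm _ (1 : ℝ), ← add_assoc]
  have hsum : Summable atil := by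
    set D : ℝ := π / (2 * ((T : ℝ) + 1)) with hD
    have hDpos : 0 < D := by positivity
    have hmode : ∀ n : ℕ, Summable fun k : ℕ => ∫ x in (-1 : ℝ)..1,
        sin (n * π / 2 * (x + 1)) * sin (k * π * (x + (T + 1)) / (2 * ((T : ℝ) + 1))) := by
      intro n
      refine Summable.of_norm_bounded_eventually_nat (g := fun k : ℕ =>
        (2 * |n * π / 2| + 2 * (n * π / 2) ^ 2) / D ^ 2 * (1 / (k : ℝ) ^ 2))
        ((Real.summable_one_div_nat_pow.2 one_lt_two).mul_left _) ?_
      filter_upwards [Filter.eventually_ge_atTop 1] with k hk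
      have hk0 : (0 : ℝ) < k := by exact_mod_cast hk
      have := abs_integral_sin_mul_sin_le (B := k * D) (c := k * D * (T + 1))
        (sin_pi_half_mul_two n)
      have hfun : ∀ x : ℝ, k * π * (x + (T + 1)) / (2 * ((T : ℝ) + 1)) =
          k * D * x + k * D * (T + 1) := fun x => by rw [hD]; ring
      simp_rw [hfun, Real.norm_eq_abs]
      rw [div_mul_div_comm, mul_one, le_div_iff₀ (by positivity), ← mul_pow]
      linarith [mul_comm (D : ℝ) k]
    have : atil = fun k : ℕ => 1 / ((T : ℝ) + 1) * ∑ n ∈ Finset.Icc 1 N, ac n *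
        ∫ x in (-1 : ℝ)..1,
          sin (n * π / 2 * (x + 1)) * sin (k * π * (x + (T + 1)) / (2 * ((T : ℝ) + 1))) := by
      ext k
      rw [hb, hint _ (by fun_prop)]
    rw [this]
    exact (summable_sum fun n _ => (hmode n).mul_left _).mul_left _
  have hfull := hasSum_sine hL1 hcont ha0 hb hsum hx
  -- the terms with index a multiple of `T + 1` sum to `a x / (T + 1)`
  have hdiv : HasSum (fun k : ℕ => if (T + 1) ∣ k then
      atil k * sin (k * π * (x + (T + 1)) / (2 * ((T : ℝ) + 1))) else 0) (a x / (T + 1)) := by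
    have hinj : Function.Injective fun m : ℕ => m * (T + 1) :=
      fun _ _ h => Nat.eq_of_mul_eq_mul_right T.succ_pos h
    rw [← hinj.hasSum_iff]
    · have hterm : ∀ m : ℕ, atil (m * (T + 1)) * sin (((m * (T + 1) : ℕ) : ℝ) * π *
          (x + (T + 1)) / (2 * ((T : ℝ) + 1))) = if m ∈ Finset.Icc 1 N then
            1 / ((T : ℝ) + 1) * (ac m * sin (m * π / 2 * (x + 1))) else 0 := by
        intro m
        rcases Nat.eq_zero_or_pos m with rfl | hm
        · simp
        have hx1 : x + ((T : ℝ) + 1) = x + 1 + T := by ring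
        rw [hatil, hx1]
        simp_rw [sin_multiple hTeven]
        rw [hint _ (by fun_prop)]
        simp_rw [mul_left_comm _ ((-1 : ℝ) ^ _) _, intervalIntegral.integral_const_mul,
          integral_sin_mode m _ hm]
        have hsq : ((-1 : ℝ) ^ (m * (T / 2))) * (-1) ^ (m * (T / 2)) = 1 := by
          rw [← mul_pow]; simp
        simp only [mul_ite, mul_one, mul_zero, Finset.sum_ite_eq']
        split_ifs
        · linear_combination (1 / ((T : ℝ) + 1) * (ac m * sin (m * π / 2 * (x + 1)))) * hsq
        · simp
      have := hasSum_sum_of_ne_finset_zero (L := SummationFilter.unconditional ℕ)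
            (f := fun m : ℕ => if m ∈ Finset.Icc 1 N then
            1 / ((T : ℝ) + 1) * (ac m * sin (m * π / 2 * (x + 1))) else 0)
            (s := Finset.Icc 1 N) (fun m hm => if_neg hm)
      rw [Finset.sum_ite_mem, Finset.inter_self, ← Finset.mul_sum,
        ← ha' x (abs_le.1 hx.le), one_div_mul_eq_div] at this
      refine this.congr_fun fun m => ?_
      rw [Function.comp_apply, if_pos (dvd_mul_left _ _), hterm]
    · intro k hk
      refine if_neg fun h => hk ?_
      obtain ⟨m, rfl⟩ := h
      exact ⟨m, mul_comm _ _⟩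
  refine ⟨a x - a x / (T + 1), (hfull.sub hdiv).congr_fun fun k => ?_, by field_simp; ring⟩
  split_ifs with h
  · rw [sub_self]
  · have hk : 1 ≤ k := Nat.one_le_iff_ne_zero.2 fun h0 => h (h0 ▸ dvd_zero _)
    rw [hip k hk, mul_div_cancel_right₀ _ (sin_ne_zero_of_not_dvd hTeven h), sub_zero]
    ring_nf
end
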